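/- arXiv:2006.03821 — 3 statements merged into one kernel-verified Lean document; each statement's English description precedes it below -/
import Mathlib

section
/- Let N ≥ 1, let A_0 and Ω_0 be domains in ℂ^N, and let {A_i} and {Ω_i} be sequences of domains in ℂ^N with lim A_i = A_0 and lim Ω_i = Ω_0. For each i let f_i be holomorphic and injective on A_i with f_i(A_i) = Ω_i, and let g_i be holomorphic on Ω_i with g_i ∘ f_i = id on A_i and f_i ∘ g_i = id on Ω_i. Assume the sequence {f_i} converges locally uniformly on A_0 to a map F and {g_i} converges locally uniformly on Ω_0 to a map G. Then either (i) {f_i} is compactly divergent, i.e. for every compact K ⊆ A_0 and every compact L ⊆ Ω_0 there is i_0 such that f_i(K) ∩ L = ∅ for all i ≥ i_0; or (ii) there is a subsequence {f_{i_j}} converging locally uniformly on A_0 to a map which is a holomorphic bijection from A_0 onto Ω_0 with holomorphic inverse. -/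
open Filter Topology Set

/-- Convergence of a sequence of domains: every compact subset of the limit is eventually
contained in the terms, and every compact set eventually contained in the terms lies in
the limit. -/
def DomainSeqConv {E : Type*} [TopologicalSpace E] (Ωs : ℕ → Set E) (Ω0 : Set E) : Prop :=
  (∀ K : Set E, K ⊆ Ω0 → IsCompact K → ∃ i0 : ℕ, ∀ i ≥ i0, K ⊆ Ωs i) ∧
  (∀ K : Set E, IsCompact K → (∃ i0 : ℕ, ∀ i ≥ i0, K ⊆ Ωs i) → K ⊆ Ω0)

/-!
Let `f n : A n → Ω n` be the maps and `F`, `G` the limits of `f n` and of the inverses. If `F`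
maps `A0` into the complement of `Ω0`, then `f n` is compactly divergent, by uniform convergence
on compact sets. Otherwise the open set `S` of points of `A0` that `F` maps into `Ω0` is nonempty,
and it is all of `A0` because it is also closed in `A0`. Indeed `G ∘ F = id` on `S`, so the
Jacobian determinant of `F` does not vanish on `S`. The Jacobians of the `f n` have no zeros, so
Hurwitz's theorem on complex lines shows that the limit Jacobian does not vanish at the points of
`A0` adherent to `S` either. At such a point `x` the inverse function theorem, uniformly in `n`,
gives a neighbourhood of `F x` contained in the image `Ω n` of `f n` for all large `n`, and hence
`F x ∈ Ω0` by the convergence of `Ω n`. Exchanging the roles of `F` and `G` shows that `G` maps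
`Ω0` into `A0`, so the two limits are inverse to each other.
-/

section LocallyUniformConvergence

variable {ι X Y : Type*} [TopologicalSpace X] [UniformSpace Y] {l : Filter ι}
  {f : ι → X → Y} {F : X → Y} {U : Set X}

theorem tendstoLocallyUniformlyOn_iff_forall_tendsto_nhds (hU : IsOpen U)
    (hF : ContinuousOn F U) :
    TendstoLocallyUniformlyOn f F l U ↔
      ∀ x ∈ U, Tendsto (fun p : ι × X => f p.1 p.2) (l ×ˢ 𝓝 x) (𝓝 (F x)) := by
  rw [hU.tendstoLocallyUniformlyOn_iff_forall_tendsto]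
  refine forall₂_congr fun x hx => ?_
  have hFx : Tendsto (fun p : ι × X => F p.2) (l ×ˢ 𝓝 x) (𝓝 (F x)) :=
    (hF.continuousAt (hU.mem_nhds hx)).tendsto.comp tendsto_snd
  exact ⟨hFx.congr_uniformity, fun h => (hFx.prodMk_nhds h).mono_right (nhds_le_uniformity _)⟩

theorem continuous_comp_tendstoLocallyUniformlyOn {Z : Type*} [UniformSpace Z] {φ : Y → Z}
    (hφ : Continuous φ) (hU : IsOpen U) (hF : ContinuousOn F U)
    (h : TendstoLocallyUniformlyOn f F l U) :
    TendstoLocallyUniformlyOn (fun i => φ ∘ f i) (φ ∘ F) l U := by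
  rw [tendstoLocallyUniformlyOn_iff_forall_tendsto_nhds hU (hφ.comp_continuousOn hF)]
  intro x hx
  exact (hφ.tendsto _).comp ((tendstoLocallyUniformlyOn_iff_forall_tendsto_nhds hU hF).1 h x hx)

theorem eventually_mapsTo_of_tendstoLocallyUniformlyOn (hU : IsOpen U) (hF : ContinuousOn F U)
    (h : TendstoLocallyUniformlyOn f F l U) {K : Set X} (hKU : K ⊆ U) (hK : IsCompact K)
    {V : Set Y} (hV : IsOpen V) (hFV : MapsTo F K V) : ∀ᶠ i in l, MapsTo (f i) K V := by
  have hmem : ∀ᶠ p : ι × X in l ×ˢ 𝓝ˢ K, f p.1 p.2 ∈ V :=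
    hK.mem_prod_nhdsSet_of_forall fun x hx =>
      (tendstoLocallyUniformlyOn_iff_forall_tendsto_nhds hU hF).1 h x (hKU hx)
        (hV.mem_nhds (hFV hx))
  exact hmem.curry.mono fun i hi x hx => hi.self_of_nhdsSet x hx

end LocallyUniformConvergence

section Holomorphic

open Metric

variable {ι E F : Type*} [NormedAddCommGroup E] [NormedSpace ℂ E]
  [NormedAddCommGroup F] [NormedSpace ℂ F] {l : Filter ι}

theorem norm_sub_sub_fderiv_le_of_mapsTo_ball {f : E → F} {c z : E} {R M : ℝ}
    (hd : DifferentiableOn ℂ f (ball c R)) (hM : MapsTo f (ball c R) (closedBall (f c) M))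
    (hz : z ∈ ball c R) : ‖f z - f c - fderiv ℂ f c (z - c)‖ ≤ 2 * M * (dist z c / R) ^ 2 := by
  have hR : 0 < R := pos_of_mem_ball hz
  set T := fderiv ℂ f c
  have hM0 : 0 ≤ M := nonempty_closedBall.1 ⟨f z, hM hz⟩
  have hT : ∀ w ∈ ball c R, ‖T (w - c)‖ ≤ M := fun w hw =>
    calc ‖T (w - c)‖ ≤ ‖T‖ * ‖w - c‖ := T.le_opNorm _
      _ ≤ M / R * R := by
        gcongr
        · exact Complex.norm_fderiv_le_div_of_mapsTo_ball hd hM hR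
        · exact (mem_ball_iff_norm.1 hw).le
      _ = M := div_mul_cancel₀ M hR.ne'
  have hmaps : MapsTo (fun w => f w - T (w - c)) (ball c R)
      (closedBall (f c - T (c - c)) (2 * M)) := fun w hw => by
    rw [mem_closedBall_iff_norm, sub_self, map_zero, sub_zero, sub_right_comm]
    linarith [norm_sub_le (f w - f c) (T (w - c)), hT w hw, mem_closedBall_iff_norm.1 (hM hw)]
  have hlittle : (fun w => f w - T (w - c) - (f c - T (c - c))) =o[𝓝 c]
      fun w => ‖w - c‖ ^ 1 := by
    simp only [sub_self, map_zero, sub_zero, pow_one, sub_right_comm _ _ (f c)]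
    exact (hd.differentiableAt (ball_mem_nhds c hR)).hasFDerivAt.isLittleO.norm_right
  have hdiff : DifferentiableOn ℂ (fun w => f w - T (w - c)) (ball c R) :=
    hd.fun_sub (by fun_prop)
  simpa only [dist_eq_norm, sub_self, map_zero, sub_zero, sub_right_comm _ _ (f c),
    one_add_one_eq_two] using
    Complex.dist_le_mul_div_pow_of_mapsTo_ball_of_isLittleO hdiff hmaps hlittle hz

theorem uniformCauchySeqOn_fderiv {f : ι → E → F} {s : Set E} {δ : ℝ} (hδ : 0 < δ)
    (hd : ∀ᶠ n in l, DifferentiableOn ℂ (f n) (thickening δ s))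
    (hf : UniformCauchySeqOn f l (thickening δ s)) :
    UniformCauchySeqOn (fun n => fderiv ℂ (f n)) l s := by
  intro u hu
  obtain ⟨ε, hε, hεu⟩ := mem_uniformity_dist.1 hu
  filter_upwards [hf _ (dist_mem_uniformity (show 0 < ε * δ / 4 by positivity)),
    hd.prod_mk hd] with ⟨m, n⟩ hmn ⟨hm, hn⟩ z hz
  have hball : ball z δ ⊆ thickening δ s := ball_subset_thickening hz δ
  have hat : ∀ k, DifferentiableOn ℂ (f k) (thickening δ s) → DifferentiableAt ℂ (f k) z :=
    fun k hk => (hk.mono hball).differentiableAt (ball_mem_nhds z hδ)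
  have hsmall : ∀ w ∈ ball z δ, ‖f m w - f n w‖ ≤ ε * δ / 4 := fun w hw =>
    dist_eq_norm (f m w) (f n w) ▸ (hmn w (hball hw)).le
  have hmaps : MapsTo (f m - f n) (ball z δ) (closedBall ((f m - f n) z) (ε * δ / 2)) :=
    fun w hw => by
      rw [mem_closedBall_iff_norm, Pi.sub_apply, Pi.sub_apply]
      linarith [norm_sub_le (f m w - f n w) (f m z - f n z), hsmall w hw,
        hsmall z (mem_ball_self hδ)]
  refine hεu ?_
  calc dist (fderiv ℂ (f m) z) (fderiv ℂ (f n) z) = ‖fderiv ℂ (f m - f n) z‖ := by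
        rw [dist_eq_norm, fderiv_sub (hat m hm) (hat n hn)]
    _ ≤ ε * δ / 2 / δ :=
        Complex.norm_fderiv_le_div_of_mapsTo_ball ((hm.sub hn).mono hball) hmaps hδ
    _ < ε := by rw [div_right_comm, mul_div_cancel_right₀ _ hδ.ne']; exact half_lt_self hε

theorem differentiableAt_and_tendsto_fderiv_of_tendstoUniformlyOn [l.NeBot] [CompleteSpace F]
    {f : ι → E → F} {g : E → F} {x : E} {V : Set E} (hV : V ∈ 𝓝 x)
    (hd : ∀ᶠ n in l, DifferentiableOn ℂ (f n) V) (hf : TendstoUniformlyOn f g l V) :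
    DifferentiableAt ℂ g x ∧
      Tendsto (fun n => fderiv ℂ (f n) x) l (𝓝 (fderiv ℂ g x)) := by
  obtain ⟨R, hR, hRV⟩ := Metric.mem_nhds_iff.1 hV
  have hsub : thickening (R / 2) (ball x (R / 2)) ⊆ V :=
    (thickening_ball x _ _).trans (by rwa [add_halves])
  have hcauchy : UniformCauchySeqOn (fun n => fderiv ℂ (f n)) l (ball x (R / 2)) :=
    uniformCauchySeqOn_fderiv (half_pos hR) (hd.mono fun n hn => hn.mono hsub)
      (hf.uniformCauchySeqOn.mono hsub)
  have hlim : ∀ z ∈ ball x (R / 2), ∃ T, Tendsto (fun n => fderiv ℂ (f n) z) l (𝓝 T) :=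
    fun z hz => cauchy_map_iff_exists_tendsto.1 (hcauchy.cauchy_map hz)
  choose! g' hg' using hlim
  have hx : x ∈ ball x (R / 2) := mem_ball_self (half_pos hR)
  have hderiv : HasFDerivAt g (g' x) x := by
    refine hasFDerivAt_of_tendstoUniformlyOnFilter (l := l) (f' := fun n => fderiv ℂ (f n))
      ((hcauchy.tendstoUniformlyOn_of_tendsto hg').tendstoUniformlyOnFilter.mono_right
        (le_principal_iff.2 (isOpen_ball.mem_nhds hx))) ?_
      (mem_of_superset hV fun y hy => hf.tendsto_at hy)
    filter_upwards [hd.prod_mk (eventually_mem_nhds_iff.2 hV)] with p ⟨hp, hpV⟩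
    exact (hp.differentiableAt hpV).hasFDerivAt
  exact ⟨hderiv.differentiableAt, hderiv.fderiv ▸ hg' x hx⟩

theorem tendstoUniformlyOn_fderiv_of_thickening [l.NeBot] [CompleteSpace F]
    {f : ι → E → F} {g : E → F} {s : Set E} {δ : ℝ} (hδ : 0 < δ)
    (hd : ∀ᶠ n in l, DifferentiableOn ℂ (f n) (thickening δ s))
    (hf : TendstoUniformlyOn f g l (thickening δ s)) :
    TendstoUniformlyOn (fun n => fderiv ℂ (f n)) (fderiv ℂ g) l s :=
  (uniformCauchySeqOn_fderiv hδ hd hf.uniformCauchySeqOn).tendstoUniformlyOn_of_tendsto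
    fun _ hx => (differentiableAt_and_tendsto_fderiv_of_tendstoUniformlyOn
      (isOpen_thickening.mem_nhds (self_subset_thickening hδ s hx)) hd hf).2

theorem tendstoUniformlyOn_inv_smul_sub_fderiv {f : E → F} {s : Set E} {R M : ℝ} (hR : 0 < R)
    (hd : ∀ z ∈ s, DifferentiableOn ℂ f (ball z R))
    (hM : ∀ z ∈ s, MapsTo f (ball z R) (closedBall (f z) M)) (e : E) :
    TendstoUniformlyOn (fun (t : ℂ) z => t⁻¹ • (f (z + t • e) - f z))
      (fun z => fderiv ℂ f z e) (𝓝[≠] 0) s := by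
  rw [Metric.tendstoUniformlyOn_iff]
  intro ε hε
  have hlim : ∀ C : ℝ, Tendsto (fun t : ℂ => ‖t‖ * C) (𝓝[≠] 0) (𝓝 0) := fun C =>
    (Continuous.tendsto' (by fun_prop) 0 0 (by simp)).mono_left nhdsWithin_le_nhds
  filter_upwards [(hlim ‖e‖).eventually_lt_const hR,
    (hlim (2 * M * (‖e‖ / R) ^ 2)).eventually_lt_const hε, self_mem_nhdsWithin]
    with t htR htε (ht : t ≠ 0) z hz
  have htaylor := norm_sub_sub_fderiv_le_of_mapsTo_ball (hd z hz) (hM z hz)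
    (z := z + t • e) (by rwa [mem_ball_iff_norm, add_sub_cancel_left, norm_smul])
  rw [dist_eq_norm, add_sub_cancel_left, norm_smul] at htaylor
  rw [dist_comm, dist_eq_norm]
  calc ‖t⁻¹ • (f (z + t • e) - f z) - fderiv ℂ f z e‖
      = ‖t‖⁻¹ * ‖f (z + t • e) - f z - fderiv ℂ f z (t • e)‖ := by
        rw [← norm_inv, ← norm_smul, smul_sub _ _ (fderiv ℂ f z _), map_smul,
          inv_smul_smul₀ ht]
    _ ≤ ‖t‖⁻¹ * (2 * M * (‖t‖ * ‖e‖ / R) ^ 2) := by gcongr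
    _ = ‖t‖ * (2 * M * (‖e‖ / R) ^ 2) := by
        have := norm_ne_zero_iff.2 ht
        field_simp
    _ < ε := htε

theorem differentiableAt_of_forall_clm_apply {𝕜 D E F : Type*} [NontriviallyNormedField 𝕜]
    [CompleteSpace 𝕜] [NormedAddCommGroup D] [NormedSpace 𝕜 D] [NormedAddCommGroup E]
    [NormedSpace 𝕜 E] [NormedAddCommGroup F] [NormedSpace 𝕜 F] [FiniteDimensional 𝕜 E]
    {f : D → E →L[𝕜] F} {x : D} (h : ∀ y, DifferentiableAt 𝕜 (fun z => f z y) x) :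
    DifferentiableAt 𝕜 f x := by
  let e₁ := ContinuousLinearEquiv.ofFinrankEq
    (Module.finrank_fin_fun 𝕜 (n := Module.finrank 𝕜 E)).symm
  let e₂ := (e₁.arrowCongr (1 : F ≃L[𝕜] F)).trans (ContinuousLinearEquiv.piRing _)
  rw [← Function.id_comp f, ← e₂.symm_comp_self]
  exact e₂.symm.differentiableAt.comp x (differentiableAt_pi.2 fun i => h _)

theorem differentiableOn_fderiv [FiniteDimensional ℂ E] [CompleteSpace F] {f : E → F}
    {U : Set E} (hf : DifferentiableOn ℂ f U) (hU : IsOpen U) :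
    DifferentiableOn ℂ (fderiv ℂ f) U := by
  intro c hc
  refine (differentiableAt_of_forall_clm_apply fun e => ?_).differentiableWithinAt
  have hcont : ContinuousAt f c := (hf.differentiableAt (hU.mem_nhds hc)).continuousAt
  obtain ⟨R, hR, hball⟩ := Metric.mem_nhds_iff.1
    (inter_mem (hU.mem_nhds hc) (hcont (ball_mem_nhds (f c) one_pos)))
  have hsub : ∀ z ∈ ball c (R / 2), ball z (R / 2) ⊆ ball c R := fun z hz =>
    ball_subset_ball' (by linarith [mem_ball.1 hz])
  have hdR : DifferentiableOn ℂ f (ball c R) := hf.mono fun z hz => (hball hz).1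
  -- `fderiv ℂ f · e` is holomorphic because difference quotients, which are holomorphic, converge
  -- to it uniformly near `c`.
  have hquot : TendstoUniformlyOn (fun (t : ℂ) z => t⁻¹ • (f (z + t • e) - f z))
      (fun z => fderiv ℂ f z e) (𝓝[≠] 0) (ball c (R / 2)) := by
    refine tendstoUniformlyOn_inv_smul_sub_fderiv (M := 2) (half_pos hR)
      (fun z hz => hdR.mono (hsub z hz)) (fun z hz w hw => ?_) e
    have hw1 : dist (f w) (f c) < 1 := (hball (hsub z hz hw)).2
    have hz1 : dist (f z) (f c) < 1 := (hball (hsub z hz (mem_ball_self (half_pos hR)))).2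
    rw [mem_closedBall]
    linarith [dist_triangle_right (f w) (f z) (f c)]
  have hsmall : ∀ᶠ t : ℂ in 𝓝[≠] 0, ‖t • e‖ < R / 2 :=
    ((Continuous.tendsto' (by fun_prop) 0 0 (by simp)).mono_left
      nhdsWithin_le_nhds).eventually_lt_const (half_pos hR)
  refine (differentiableAt_and_tendsto_fderiv_of_tendstoUniformlyOn
    (ball_mem_nhds c (half_pos hR)) ?_ hquot).1
  filter_upwards [hsmall] with t ht
  refine ((hdR.comp (by fun_prop) fun z hz => hsub z hz ?_).sub
    (hdR.mono (ball_subset_ball (by linarith)))).const_smul t⁻¹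
  rwa [mem_ball_iff_norm, add_sub_cancel_left]

section LocallyUniformLimit

variable [LocallyCompactSpace E] {f : ι → E → F} {g : E → F} {U : Set E}

theorem exists_mem_nhds_differentiableOn_and_tendstoUniformlyOn (hU : IsOpen U)
    (hf : TendstoLocallyUniformlyOn f g l U) {x : E} (hx : x ∈ U)
    (hd : ∀ᶠ p : ι × E in l ×ˢ 𝓝 x, DifferentiableAt ℂ (f p.1) p.2) :
    ∃ V ∈ 𝓝 x, (∀ᶠ n in l, DifferentiableOn ℂ (f n) V) ∧ TendstoUniformlyOn f g l V := by
  obtain ⟨P, hP, Q, hQ, hPQ⟩ := eventually_prod_iff.1 hd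
  obtain ⟨K, hKx, hK, hKc⟩ := local_compact_nhds (inter_mem (hU.mem_nhds hx) hQ)
  exact ⟨K, hKx, hP.mono fun n hn y hy => (hPQ hn (hK hy).2).differentiableWithinAt,
    (tendstoLocallyUniformlyOn_iff_forall_isCompact hU).1 hf K (fun y hy => (hK hy).1) hKc⟩

variable [l.NeBot] [CompleteSpace F]

theorem differentiableOn_of_tendstoLocallyUniformlyOn (hU : IsOpen U)
    (hf : TendstoLocallyUniformlyOn f g l U)
    (hd : ∀ x ∈ U, ∀ᶠ p : ι × E in l ×ˢ 𝓝 x, DifferentiableAt ℂ (f p.1) p.2) :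
    DifferentiableOn ℂ g U := fun x hx => by
  obtain ⟨V, hV, hdV, hfV⟩ :=
    exists_mem_nhds_differentiableOn_and_tendstoUniformlyOn hU hf hx (hd x hx)
  exact (differentiableAt_and_tendsto_fderiv_of_tendstoUniformlyOn
    hV hdV hfV).1.differentiableWithinAt

theorem tendstoLocallyUniformlyOn_fderiv (hU : IsOpen U)
    (hf : TendstoLocallyUniformlyOn f g l U)
    (hd : ∀ x ∈ U, ∀ᶠ p : ι × E in l ×ˢ 𝓝 x, DifferentiableAt ℂ (f p.1) p.2) :
    TendstoLocallyUniformlyOn (fun n => fderiv ℂ (f n)) (fderiv ℂ g) l U := by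
  refine tendstoLocallyUniformlyOn_of_forall_exists_nhds fun x hx => ?_
  obtain ⟨V, hV, hdV, hfV⟩ :=
    exists_mem_nhds_differentiableOn_and_tendstoUniformlyOn hU hf hx (hd x hx)
  obtain ⟨R, hR, hRV⟩ := Metric.mem_nhds_iff.1 hV
  have hsub : thickening (R / 2) (ball x (R / 2)) ⊆ V :=
    (thickening_ball x _ _).trans (by rwa [add_halves])
  exact ⟨ball x (R / 2), mem_nhdsWithin_of_mem_nhds (ball_mem_nhds x (half_pos hR)),
    tendstoUniformlyOn_fderiv_of_thickening (half_pos hR)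
      (hdV.mono fun n hn => hn.mono hsub) (hfV.mono hsub)⟩

end LocallyUniformLimit

end Holomorphic

section Hurwitz

open Metric Bornology

variable {ι E : Type*} [NormedAddCommGroup E] [NormedSpace ℂ E] {l : Filter ι}

theorem le_norm_of_forall_mem_frontier_le_norm [Nontrivial E] {h : E → ℂ} {U : Set E}
    (hU : IsBounded U) (hd : DiffContOnCl ℂ h U) (h0 : ∀ z ∈ closure U, h z ≠ 0) {δ : ℝ}
    (hδ : ∀ z ∈ frontier U, δ ≤ ‖h z‖) {z : E} (hz : z ∈ closure U) : δ ≤ ‖h z‖ := by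
  rcases le_or_gt δ 0 with hδ0 | hδ0
  · exact hδ0.trans (norm_nonneg _)
  have hinv : ‖(h z)⁻¹‖ ≤ δ⁻¹ :=
    Complex.norm_le_of_forall_mem_frontier_norm_le (f := h⁻¹) hU (hd.inv h0)
      (fun w hw => by
        rw [Pi.inv_apply, norm_inv]
        exact inv_anti₀ hδ0 (hδ w hw)) hz
  rw [norm_inv] at hinv
  exact (inv_le_inv₀ (norm_pos_iff.2 (h0 z hz)) hδ0).1 hinv

theorem eqOn_zero_or_forall_ne_zero_of_tendstoLocallyUniformlyOn [l.NeBot] {h : ι → ℂ → ℂ}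
    {H : ℂ → ℂ} {U : Set ℂ} (hU : IsOpen U) (hUc : IsPreconnected U)
    (hlim : TendstoLocallyUniformlyOn h H l U) (hd : ∀ᶠ n in l, DifferentiableOn ℂ (h n) U)
    (hne : ∀ᶠ n in l, ∀ t ∈ U, h n t ≠ 0) : EqOn H 0 U ∨ ∀ t ∈ U, H t ≠ 0 := by
  rw [or_iff_not_imp_left]
  intro hH0 a ha hHa
  have hH : DifferentiableOn ℂ H U := hlim.differentiableOn hd hU
  have han : AnalyticOnNhd ℂ H U := hH.analyticOnNhd hU
  have hisolated : ∀ᶠ t in 𝓝[≠] a, H t ≠ 0 :=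
    (han a ha).eventually_eq_zero_or_eventually_ne_zero.resolve_left fun h0 =>
      hH0 (han.eqOn_zero_of_preconnected_of_eventuallyEq_zero hUc ha h0)
  obtain ⟨r, hr, hball⟩ := nhds_basis_closedBall.mem_iff.1
    (inter_mem (hU.mem_nhds ha) (eventually_nhdsWithin_iff.1 hisolated))
  have hsU : sphere a r ⊆ U := fun t ht => (hball (sphere_subset_closedBall ht)).1
  obtain ⟨δ, hδ, hδH⟩ : ∃ δ > 0, ∀ t ∈ sphere a r, δ < ‖H t‖ := by
    obtain ⟨t₀, ht₀, hmin⟩ := (isCompact_sphere a r).exists_isMinOn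
      (NormedSpace.sphere_nonempty.2 hr.le) (hH.continuousOn.mono hsU).norm
    have hHt₀ : 0 < ‖H t₀‖ :=
      norm_pos_iff.2 ((hball (sphere_subset_closedBall ht₀)).2 (ne_of_mem_sphere ht₀ hr.ne'))
    exact ⟨‖H t₀‖ / 2, half_pos hHt₀, fun t ht => (half_lt_self hHt₀).trans_le (hmin ht)⟩
  have hsphere : ∀ᶠ n in l, ∀ t ∈ sphere a r, δ < ‖h n t‖ :=
    eventually_mapsTo_of_tendstoLocallyUniformlyOn hU hH.continuousOn hlim hsU
      (isCompact_sphere a r) (isOpen_lt continuous_const continuous_norm) hδH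
  have hcenter : ∀ᶠ n in l, ‖h n a‖ < δ :=
    (hlim.tendsto_at ha).norm.eventually_lt_const (by rwa [hHa, norm_zero])
  obtain ⟨n, hdn, hnen, hsn, hcn⟩ := (hd.and (hne.and (hsphere.and hcenter))).exists
  have hcl : closure (ball a r) ⊆ U :=
    closure_ball_subset_closedBall.trans fun t ht => (hball ht).1
  refine hcn.not_ge (le_norm_of_forall_mem_frontier_le_norm isBounded_ball
    (hdn.mono hcl).diffContOnCl (fun t ht => hnen t (hcl ht)) (fun t ht => ?_)
    (subset_closure (mem_ball_self hr)))
  exact (hsn t (frontier_ball a hr.ne' ▸ ht)).le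

theorem ne_zero_of_tendstoLocallyUniformlyOn_of_frequently_ne_zero [l.NeBot] {h : ι → E → ℂ}
    {H : E → ℂ} {U : Set E} {x : E} (hU : U ∈ 𝓝 x) (hlim : TendstoLocallyUniformlyOn h H l U)
    (hd : ∀ᶠ p : ι × E in l ×ˢ 𝓝 x, DifferentiableAt ℂ (h p.1) p.2)
    (hne : ∀ᶠ p : ι × E in l ×ˢ 𝓝 x, h p.1 p.2 ≠ 0) (hH : ∃ᶠ y in 𝓝 x, H y ≠ 0) :
    H x ≠ 0 := by
  obtain ⟨P, hP, Q, hQ, hPQ⟩ := eventually_prod_iff.1 (hd.and hne)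
  obtain ⟨R, hR, hball⟩ := Metric.mem_nhds_iff.1 (inter_mem hU hQ)
  obtain ⟨y, hy0, hyx⟩ := (hH.and_eventually (ball_mem_nhds x (half_pos hR))).exists
  let line : ℂ → E := fun t => x + t • (y - x)
  have hline : Differentiable ℂ line := by fun_prop
  have hmaps : MapsTo line (ball 0 2) (ball x R) := fun t ht => by
    rw [mem_ball_zero_iff] at ht
    rw [mem_ball_iff_norm, add_sub_cancel_left, norm_smul]
    nlinarith [norm_nonneg t, norm_nonneg (y - x), mem_ball_iff_norm.1 hyx]
  have hline0 : line 0 = x := by simp [line]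
  have hline1 : line 1 = y := by simp [line]
  have hhurwitz : EqOn (H ∘ line) 0 (ball 0 2) ∨ ∀ t ∈ ball (0 : ℂ) 2, (H ∘ line) t ≠ 0 :=
    eqOn_zero_or_forall_ne_zero_of_tendstoLocallyUniformlyOn isOpen_ball
      (convex_ball 0 2).isPreconnected
      (hlim.comp line (fun t ht => (hball (hmaps ht)).1) hline.continuous.continuousOn)
      (hP.mono fun n hn t ht => ((hPQ hn (hball (hmaps ht)).2).1.comp t
        (hline t)).differentiableWithinAt)
      (hP.mono fun n hn t ht => (hPQ hn (hball (hmaps ht)).2).2)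
  rcases hhurwitz with hzero | hnonzero
  · exact absurd (hline1 ▸ hzero (x := 1) (by simp)) hy0
  · exact hline0 ▸ hnonzero 0 (by simp)

end Hurwitz

section Jacobian

variable {𝕜 E : Type*} [NontriviallyNormedField 𝕜] [NormedAddCommGroup E] [NormedSpace 𝕜 E]

theorem det_fderiv_ne_zero_of_leftInverse {f g : E → E} {x : E} (hf : DifferentiableAt 𝕜 f x)
    (hg : DifferentiableAt 𝕜 g (f x)) (hgf : g ∘ f =ᶠ[𝓝 x] id) : (fderiv 𝕜 f x).det ≠ 0 := by
  have hcomp : (fderiv 𝕜 g (f x)).comp (fderiv 𝕜 f x) = ContinuousLinearMap.id 𝕜 E := by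
    rw [← fderiv_comp x hg hf, hgf.fderiv_eq, fderiv_id]
  refine right_ne_zero_of_mul_eq_one (a := (fderiv 𝕜 g (f x)).det) ?_
  rw [ContinuousLinearMap.det, ContinuousLinearMap.det, ← LinearMap.det_comp,
    ← ContinuousLinearMap.toLinearMap_comp, hcomp, ContinuousLinearMap.coe_id,
    LinearMap.det_id]

theorem differentiable_clm_det [CompleteSpace 𝕜] [FiniteDimensional 𝕜 E] :
    Differentiable 𝕜 (fun T : E →L[𝕜] E => T.det) := by
  classical
  let b := Module.finBasis 𝕜 E
  have hentry : ∀ i j, Differentiable 𝕜 fun T : E →L[𝕜] E => b.repr (T (b i)) j := fun i j =>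
    (LinearMap.toContinuousLinearMap (b.coord j)).differentiable.comp
      (ContinuousLinearMap.apply 𝕜 E (b i)).differentiable
  have hdet : (fun T : E →L[𝕜] E => T.det) = fun T : E →L[𝕜] E =>
      ∑ σ : Equiv.Perm (Fin (Module.finrank 𝕜 E)),
        (Equiv.Perm.sign σ : 𝕜) * ∏ i, b.repr (T (b i)) (σ i) := by
    ext T
    rw [ContinuousLinearMap.det, ← LinearMap.det_toMatrix b, Matrix.det_apply']
    simp only [LinearMap.toMatrix_apply, ContinuousLinearMap.coe_coe]
  rw [hdet]
  fun_prop

end Jacobian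

section PerturbedLocalSurjectivity

open Metric NNReal

variable {ι 𝕜 E F : Type*} [RCLike 𝕜] [NormedAddCommGroup E] [NormedSpace 𝕜 E]
  [NormedAddCommGroup F] [NormedSpace 𝕜 F] {l : Filter ι} {f : ι → E → F} {L : E →L[𝕜] F}
  {x : E} {y : F} {V : Set E}

theorem exists_mem_nhds_eventually_approximatesLinearOn
    (hd : ∀ᶠ p : ι × E in l ×ˢ 𝓝 x, DifferentiableAt 𝕜 (f p.1) p.2)
    (hf' : Tendsto (fun p : ι × E => fderiv 𝕜 (f p.1) p.2) (l ×ˢ 𝓝 x) (𝓝 L)) {c : ℝ≥0}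
    (hc : 0 < c) : ∃ s ∈ 𝓝 x, ∀ᶠ n in l, ApproximatesLinearOn (f n) L s c := by
  let _ : NormedSpace ℝ E := .restrictScalars ℝ 𝕜 E
  obtain ⟨P, hP, Q, hQ, hPQ⟩ :=
    eventually_prod_iff.1 (hd.and (hf' (closedBall_mem_nhds L (NNReal.coe_pos.2 hc))))
  obtain ⟨ε, hε, hball⟩ := Metric.mem_nhds_iff.1 hQ
  refine ⟨ball x ε, ball_mem_nhds x hε, hP.mono fun n hn z hz w hw => ?_⟩
  exact (convex_ball x ε).norm_image_sub_le_of_norm_fderiv_le'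
    (fun v hv => (hPQ hn (hball hv)).1)
    (fun v hv => mem_closedBall_iff_norm.1 (hPQ hn (hball hv)).2) hw hz

theorem eventually_mem_image_of_tendsto_fderiv [CompleteSpace E] [CompleteSpace F]
    (hd : ∀ᶠ p : ι × E in l ×ˢ 𝓝 x, DifferentiableAt 𝕜 (f p.1) p.2)
    (hf : Tendsto (fun n => f n x) l (𝓝 y))
    (hf' : Tendsto (fun p : ι × E => fderiv 𝕜 (f p.1) p.2) (l ×ˢ 𝓝 x) (𝓝 L))
    (hL : L.range = ⊤) (hV : V ∈ 𝓝 x) : ∀ᶠ p : ι × F in l ×ˢ 𝓝 y, p.2 ∈ f p.1 '' V := by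
  let R := L.nonlinearRightInverseOfSurjective hL
  set c : ℝ≥0 := R.nnnorm⁻¹ / 2 with hcR
  have hc : 0 < c := half_pos (inv_pos.2 (L.nonlinearRightInverseOfSurjective_nnnorm_pos hL))
  obtain ⟨s, hs, happrox⟩ := exists_mem_nhds_eventually_approximatesLinearOn hd hf' hc
  obtain ⟨ε, hε, hball⟩ := nhds_basis_closedBall.mem_iff.1 (inter_mem hV hs)
  have hρ : 0 < c * ε / 2 := by positivity
  filter_upwards [(happrox.and (hf (ball_mem_nhds y hρ))).prod_mk (ball_mem_nhds y hρ)]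
    with ⟨n, w⟩ ⟨⟨hn, hnx⟩, hw⟩
  have hsurj : SurjOn (f n) (closedBall x ε) (closedBall (f n x) (c * ε)) := by
    have hrad : (R.nnnorm : ℝ)⁻¹ - c = c := by rw [hcR]; push_cast; ring
    simpa only [hrad] using (hn.mono_set fun z hz =>
      (hball hz).2).surjOn_closedBall_of_nonlinearRightInverse R hε.le subset_rfl
  have hmem : w ∈ closedBall (f n x) (c * ε) :=
    calc dist w (f n x) ≤ dist w y + dist (f n x) y := dist_triangle_right _ _ _
      _ ≤ c * ε / 2 + c * ε / 2 := add_le_add hw.le (mem_ball.1 hnx).le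
      _ = c * ε := add_halves _
  exact image_mono (fun z hz => (hball hz).1) (hsurj hmem)

end PerturbedLocalSurjectivity

section DomainSeqConv

variable {X : Type*} [TopologicalSpace X] [LocallyCompactSpace X] {A : ℕ → Set X} {A0 : Set X}
  {x : X}

theorem DomainSeqConv.eventually_mem (h : DomainSeqConv A A0) (hA0 : IsOpen A0) (hx : x ∈ A0) :
    ∀ᶠ p : ℕ × X in atTop ×ˢ 𝓝 x, p.2 ∈ A p.1 := by
  obtain ⟨K, hKx, hKA, hK⟩ := local_compact_nhds (hA0.mem_nhds hx)
  filter_upwards [(eventually_atTop.2 (h.1 K hKA hK)).prod_mk hKx] with p ⟨hp, hpK⟩ using hp hpK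

theorem DomainSeqConv.mem_of_eventually_mem (h : DomainSeqConv A A0)
    (hx : ∀ᶠ p : ℕ × X in atTop ×ˢ 𝓝 x, p.2 ∈ A p.1) : x ∈ A0 := by
  obtain ⟨P, hP, Q, hQ, hPQ⟩ := eventually_prod_iff.1 hx
  obtain ⟨K, hKx, hKQ, hK⟩ := local_compact_nhds hQ
  exact h.2 K hK (eventually_atTop.1 (hP.mono fun n hn y hy => hPQ hn (hKQ hy)))
    (mem_of_mem_nhds hKx)

end DomainSeqConv

section CompactDivergence

variable {X Y : Type*} [TopologicalSpace X]

/-- Compact divergence of a sequence of maps from `U` to `V`: the images of every compact subset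
of `U` eventually leave every compact subset of `V`. The maps `f i` are total; in the application
`f i` is only meaningful on a domain that contains each compact `K ⊆ U` for large `i`. -/
def CompactlyDivergent [TopologicalSpace Y] (f : ℕ → X → Y) (U : Set X) (V : Set Y) : Prop :=
  ∀ K : Set X, K ⊆ U → IsCompact K → ∀ L : Set Y, L ⊆ V → IsCompact L →
    ∃ i0 : ℕ, ∀ i ≥ i0, f i '' K ∩ L = ∅

theorem compactlyDivergent_of_tendstoLocallyUniformlyOn [UniformSpace Y] [T2Space Y]
    {f : ℕ → X → Y} {F : X → Y} {U : Set X} {V : Set Y} (hU : IsOpen U) (hF : ContinuousOn F U)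
    (hf : TendstoLocallyUniformlyOn f F atTop U) (hFV : MapsTo F U Vᶜ) :
    CompactlyDivergent f U V := by
  intro K hKU hK L hLV hL
  refine eventually_atTop.1 ?_
  filter_upwards [eventually_mapsTo_of_tendstoLocallyUniformlyOn hU hF hf hKU hK
    hL.isClosed.isOpen_compl fun x hx hxL => hFV (hKU hx) (hLV hxL)] with i hi
  exact disjoint_iff_inter_eq_empty.1 (disjoint_left.2 (forall_mem_image.2 hi))

end CompactDivergence

section Biholomorphic

variable {E W : Type*} [NormedAddCommGroup E] [NormedSpace ℂ E]
  [NormedAddCommGroup W] [NormedSpace ℂ W]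

/-- `f` is a biholomorphic map from `A` onto `Ω`. The inverse `g` is an argument, so that passing to
the inverse map is a symmetry of the definition. -/
structure BiholomorphicOn (f : E → W) (g : W → E) (A : Set E) (Ω : Set W) : Prop where
  differentiableOn : DifferentiableOn ℂ f A
  differentiableOn_inv : DifferentiableOn ℂ g Ω
  mapsTo : MapsTo f A Ω
  mapsTo_inv : MapsTo g Ω A
  invOn : InvOn g f A Ω

namespace BiholomorphicOn

theorem of_image_eq {f : E → W} {g : W → E} {A : Set E} {Ω : Set W}
    (hf : DifferentiableOn ℂ f A) (hg : DifferentiableOn ℂ g Ω) (himage : f '' A = Ω)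
    (hgf : LeftInvOn g f A) : BiholomorphicOn f g A Ω := by
  subst himage
  exact ⟨hf, hg, mapsTo_image f A, hgf.mapsTo (surjOn_image f A), hgf, hgf.rightInvOn_image⟩

theorem symm {f : E → W} {g : W → E} {A : Set E} {Ω : Set W} (h : BiholomorphicOn f g A Ω) :
    BiholomorphicOn g f Ω A :=
  ⟨h.differentiableOn_inv, h.differentiableOn, h.mapsTo_inv, h.mapsTo, h.invOn.symm⟩

theorem bijOn {f : E → W} {g : W → E} {A : Set E} {Ω : Set W} (h : BiholomorphicOn f g A Ω) :
    BijOn f A Ω :=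
  h.invOn.bijOn h.mapsTo h.mapsTo_inv

theorem det_fderiv_ne_zero {f g : E → E} {A Ω : Set E} (h : BiholomorphicOn f g A Ω)
    (hA : IsOpen A) (hΩ : IsOpen Ω) {x : E} (hx : x ∈ A) : (fderiv ℂ f x).det ≠ 0 :=
  det_fderiv_ne_zero_of_leftInverse (h.differentiableOn.differentiableAt (hA.mem_nhds hx))
    (h.differentiableOn_inv.differentiableAt (hΩ.mem_nhds (h.mapsTo hx)))
    (mem_of_superset (hA.mem_nhds hx) h.invOn.1)

end BiholomorphicOn

/-- Biholomorphic maps `f i : A i → Ω i` with inverses `g i`, between open sets converging to open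
sets `A0` and `Ω0`, such that `f i → F` locally uniformly on `A0` and `g i → G` locally uniformly
on `Ω0`. -/
structure BiholomorphicConvergence (f g : ℕ → E → E) (A Ω : ℕ → Set E) (F G : E → E)
    (A0 Ω0 : Set E) : Prop where
  biholomorphicOn : ∀ i, BiholomorphicOn (f i) (g i) (A i) (Ω i)
  isOpen_source : ∀ i, IsOpen (A i)
  isOpen_target : ∀ i, IsOpen (Ω i)
  isOpen_limit_source : IsOpen A0
  isOpen_limit_target : IsOpen Ω0
  source : DomainSeqConv A A0
  target : DomainSeqConv Ω Ω0
  tendsto : TendstoLocallyUniformlyOn f F atTop A0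
  tendsto_inv : TendstoLocallyUniformlyOn g G atTop Ω0

namespace BiholomorphicConvergence

variable {f g : ℕ → E → E} {A Ω : ℕ → Set E} {F G : E → E} {A0 Ω0 : Set E} {x : E}

theorem symm (h : BiholomorphicConvergence f g A Ω F G A0 Ω0) :
    BiholomorphicConvergence g f Ω A G F Ω0 A0 where
  biholomorphicOn i := (h.biholomorphicOn i).symm
  isOpen_source := h.isOpen_target
  isOpen_target := h.isOpen_source
  isOpen_limit_source := h.isOpen_limit_target
  isOpen_limit_target := h.isOpen_limit_source
  source := h.target
  target := h.source
  tendsto := h.tendsto_inv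
  tendsto_inv := h.tendsto

variable [FiniteDimensional ℂ E]

theorem eventually_mem_source (h : BiholomorphicConvergence f g A Ω F G A0 Ω0) (hx : x ∈ A0) :
    ∀ᶠ p : ℕ × E in atTop ×ˢ 𝓝 x, p.2 ∈ A p.1 := by
  have := FiniteDimensional.proper ℂ E
  exact h.source.eventually_mem h.isOpen_limit_source hx

theorem eventually_differentiableAt (h : BiholomorphicConvergence f g A Ω F G A0 Ω0)
    (hx : x ∈ A0) : ∀ᶠ p : ℕ × E in atTop ×ˢ 𝓝 x, DifferentiableAt ℂ (f p.1) p.2 :=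
  (h.eventually_mem_source hx).mono fun p hp =>
    (h.biholomorphicOn p.1).differentiableOn.differentiableAt ((h.isOpen_source p.1).mem_nhds hp)

theorem differentiableOn_limit (h : BiholomorphicConvergence f g A Ω F G A0 Ω0) :
    DifferentiableOn ℂ F A0 := by
  have := FiniteDimensional.proper ℂ E
  exact differentiableOn_of_tendstoLocallyUniformlyOn h.isOpen_limit_source h.tendsto
    fun _ => h.eventually_differentiableAt

theorem differentiableOn_fderiv_limit (h : BiholomorphicConvergence f g A Ω F G A0 Ω0) :
    DifferentiableOn ℂ (fderiv ℂ F) A0 := by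
  have := FiniteDimensional.complete ℂ E
  exact differentiableOn_fderiv h.differentiableOn_limit h.isOpen_limit_source

theorem tendsto_fderiv (h : BiholomorphicConvergence f g A Ω F G A0 Ω0) :
    TendstoLocallyUniformlyOn (fun n => fderiv ℂ (f n)) (fderiv ℂ F) atTop A0 := by
  have := FiniteDimensional.proper ℂ E
  exact tendstoLocallyUniformlyOn_fderiv h.isOpen_limit_source h.tendsto
    fun _ => h.eventually_differentiableAt

theorem limit_leftInverse (h : BiholomorphicConvergence f g A Ω F G A0 Ω0) (hx : x ∈ A0)
    (hFx : F x ∈ Ω0) : G (F x) = x := by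
  have hg : Tendsto (fun p : ℕ × E => g p.1 p.2) (atTop ×ˢ 𝓝 (F x)) (𝓝 (G (F x))) :=
    (tendstoLocallyUniformlyOn_iff_forall_tendsto_nhds h.isOpen_limit_target
      h.symm.differentiableOn_limit.continuousOn).1 h.tendsto_inv _ hFx
  have hgf : Tendsto (fun n => g n (f n x)) atTop (𝓝 (G (F x))) :=
    hg.comp (tendsto_id.prodMk (h.tendsto.tendsto_at hx))
  refine tendsto_nhds_unique hgf (tendsto_const_nhds.congr' ?_)
  filter_upwards [(h.eventually_mem_source hx).curry] with n hn
  exact ((h.biholomorphicOn n).invOn.1 hn.self_of_nhds).symm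

theorem isOpen_inter_preimage (h : BiholomorphicConvergence f g A Ω F G A0 Ω0) :
    IsOpen (A0 ∩ F ⁻¹' Ω0) :=
  h.differentiableOn_limit.continuousOn.isOpen_inter_preimage
    h.isOpen_limit_source h.isOpen_limit_target

theorem det_fderiv_limit_ne_zero (h : BiholomorphicConvergence f g A Ω F G A0 Ω0)
    (hx : x ∈ A0 ∩ F ⁻¹' Ω0) : (fderiv ℂ F x).det ≠ 0 :=
  det_fderiv_ne_zero_of_leftInverse
    (h.differentiableOn_limit.differentiableAt (h.isOpen_limit_source.mem_nhds hx.1))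
    (h.symm.differentiableOn_limit.differentiableAt (h.isOpen_limit_target.mem_nhds hx.2))
    (mem_of_superset (h.isOpen_inter_preimage.mem_nhds hx) fun _ hy =>
      h.limit_leftInverse hy.1 hy.2)

theorem det_fderiv_limit_ne_zero_of_frequently
    (h : BiholomorphicConvergence f g A Ω F G A0 Ω0) (hx : x ∈ A0)
    (hfreq : ∃ᶠ y in 𝓝 x, (fderiv ℂ F y).det ≠ 0) : (fderiv ℂ F x).det ≠ 0 := by
  have := FiniteDimensional.complete ℂ E
  have hlim : TendstoLocallyUniformlyOn (fun n y => (fderiv ℂ (f n) y).det)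
      (fun y => (fderiv ℂ F y).det) atTop A0 :=
    continuous_comp_tendstoLocallyUniformlyOn (φ := fun T : E →L[ℂ] E => T.det)
      differentiable_clm_det.continuous
      h.isOpen_limit_source h.differentiableOn_fderiv_limit.continuousOn h.tendsto_fderiv
  refine ne_zero_of_tendstoLocallyUniformlyOn_of_frequently_ne_zero
    (h := fun n y => (fderiv ℂ (f n) y).det) (H := fun y => (fderiv ℂ F y).det)
    (h.isOpen_limit_source.mem_nhds hx) hlim ?_ ?_ hfreq
  · filter_upwards [h.eventually_mem_source hx] with ⟨n, y⟩ hy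
    exact DifferentiableAt.comp (g := fun T : E →L[ℂ] E => T.det) y
      differentiable_clm_det.differentiableAt
      ((differentiableOn_fderiv (h.biholomorphicOn n).differentiableOn
        (h.isOpen_source n)).differentiableAt ((h.isOpen_source n).mem_nhds hy))
  · filter_upwards [h.eventually_mem_source hx] with ⟨n, y⟩ hy
    exact (h.biholomorphicOn n).det_fderiv_ne_zero (h.isOpen_source n) (h.isOpen_target n) hy

theorem limit_mem_of_det_fderiv_ne_zero (h : BiholomorphicConvergence f g A Ω F G A0 Ω0)
    (hx : x ∈ A0) (hdet : (fderiv ℂ F x).det ≠ 0) : F x ∈ Ω0 := by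
  have := FiniteDimensional.proper ℂ E
  have hsurj : (fderiv ℂ F x).range = ⊤ :=
    (LinearMap.isUnit_iff_range_eq_top _).1 ((LinearMap.isUnit_iff_isUnit_det _).2 hdet.isUnit)
  have hfderiv : Tendsto (fun p : ℕ × E => fderiv ℂ (f p.1) p.2) (atTop ×ˢ 𝓝 x)
      (𝓝 (fderiv ℂ F x)) :=
    (tendstoLocallyUniformlyOn_iff_forall_tendsto_nhds h.isOpen_limit_source
      h.differentiableOn_fderiv_limit.continuousOn).1 h.tendsto_fderiv x hx
  obtain ⟨P, hP, V, hV, hPV⟩ := eventually_prod_iff.1 (h.eventually_mem_source hx)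
  have himage : ∀ᶠ p : ℕ × E in atTop ×ˢ 𝓝 (F x), p.2 ∈ f p.1 '' {y | V y} :=
    eventually_mem_image_of_tendsto_fderiv (h.eventually_differentiableAt hx)
      (h.tendsto.tendsto_at hx) hfderiv hsurj hV
  refine h.target.mem_of_eventually_mem ?_
  filter_upwards [himage, hP.prod_inl (𝓝 (F x))] with p ⟨y, hy, hyp⟩ hp
  exact hyp ▸ (h.biholomorphicOn p.1).mapsTo (hPV hp hy)

theorem limit_mapsTo (h : BiholomorphicConvergence f g A Ω F G A0 Ω0)
    (hA0 : IsPreconnected A0) (hx : x ∈ A0) (hFx : F x ∈ Ω0) : MapsTo F A0 Ω0 := by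
  have hclosed : closure (A0 ∩ F ⁻¹' Ω0) ∩ A0 ⊆ A0 ∩ F ⁻¹' Ω0 := fun y ⟨hycl, hy⟩ =>
    ⟨hy, h.limit_mem_of_det_fderiv_ne_zero hy (h.det_fderiv_limit_ne_zero_of_frequently hy
      ((mem_closure_iff_frequently.1 hycl).mono fun _ => h.det_fderiv_limit_ne_zero))⟩
  have hsub : A0 ⊆ A0 ∩ F ⁻¹' Ω0 :=
    hA0.subset_of_closure_inter_subset h.isOpen_inter_preimage ⟨x, hx, hx, hFx⟩ hclosed
  exact fun y hy => (hsub hy).2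

theorem limit_biholomorphicOn (h : BiholomorphicConvergence f g A Ω F G A0 Ω0)
    (hA0 : IsPreconnected A0) (hΩ0 : IsPreconnected Ω0) (hx : x ∈ A0) (hFx : F x ∈ Ω0) :
    BiholomorphicOn F G A0 Ω0 := by
  have hF : MapsTo F A0 Ω0 := h.limit_mapsTo hA0 hx hFx
  have hG : MapsTo G Ω0 A0 :=
    h.symm.limit_mapsTo hΩ0 hFx ((h.limit_leftInverse hx hFx).symm ▸ hx)
  exact ⟨h.differentiableOn_limit, h.symm.differentiableOn_limit, hF, hG,
    fun y hy => h.limit_leftInverse hy (hF hy), fun w hw => h.symm.limit_leftInverse hw (hG hw)⟩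

end BiholomorphicConvergence

theorem stmt0_general [FiniteDimensional ℂ E] {f g : ℕ → E → E} {A Ω : ℕ → Set E} {F G : E → E}
    {A0 Ω0 : Set E} (h : BiholomorphicConvergence f g A Ω F G A0 Ω0) (hA0 : IsPreconnected A0)
    (hΩ0 : IsPreconnected Ω0) : CompactlyDivergent f A0 Ω0 ∨ BiholomorphicOn F G A0 Ω0 := by
  by_cases hmeet : ∃ x ∈ A0, F x ∈ Ω0
  · obtain ⟨x, hx, hFx⟩ := hmeet
    exact .inr (h.limit_biholomorphicOn hA0 hΩ0 hx hFx)
  · push Not at hmeet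
    exact .inl (compactlyDivergent_of_tendstoLocallyUniformlyOn h.isOpen_limit_source
      h.differentiableOn_limit.continuousOn h.tendsto hmeet)

end Biholomorphic

theorem stmt0 (N : ℕ) (hN : 1 ≤ N)
    (A Ωs : ℕ → Set (Fin N → ℂ)) (A0 Ω0 : Set (Fin N → ℂ))
    (hAopen : ∀ i, IsOpen (A i)) (hAconn : ∀ i, IsConnected (A i))
    (hΩopen : ∀ i, IsOpen (Ωs i)) (hΩconn : ∀ i, IsConnected (Ωs i))
    (hA0open : IsOpen A0) (hA0conn : IsConnected A0)
    (hΩ0open : IsOpen Ω0) (hΩ0conn : IsConnected Ω0)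
    (hlimA : DomainSeqConv A A0) (hlimΩ : DomainSeqConv Ωs Ω0)
    (f g : ℕ → (Fin N → ℂ) → (Fin N → ℂ))
    (hfhol : ∀ i, DifferentiableOn ℂ (f i) (A i))
    (hfinj : ∀ i, Set.InjOn (f i) (A i))
    (hfim : ∀ i, f i '' A i = Ωs i)
    (hghol : ∀ i, DifferentiableOn ℂ (g i) (Ωs i))
    (hgf : ∀ i, ∀ z ∈ A i, g i (f i z) = z)
    (hfg : ∀ i, ∀ w ∈ Ωs i, f i (g i w) = w)
    (F G : (Fin N → ℂ) → (Fin N → ℂ))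
    (hF : ∀ K : Set (Fin N → ℂ), K ⊆ A0 → IsCompact K →
      TendstoUniformlyOn (fun i => f i) F atTop K)
    (hG : ∀ K : Set (Fin N → ℂ), K ⊆ Ω0 → IsCompact K →
      TendstoUniformlyOn (fun i => g i) G atTop K) :
    (∀ K : Set (Fin N → ℂ), K ⊆ A0 → IsCompact K →
      ∀ L : Set (Fin N → ℂ), L ⊆ Ω0 → IsCompact L →
        ∃ i0 : ℕ, ∀ i ≥ i0, f i '' K ∩ L = ∅) ∨
    (∃ φ : ℕ → ℕ, StrictMono φ ∧
      ∃ H Hinv : (Fin N → ℂ) → (Fin N → ℂ),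
        (∀ K : Set (Fin N → ℂ), K ⊆ A0 → IsCompact K →
          TendstoUniformlyOn (fun j => f (φ j)) H atTop K) ∧
        DifferentiableOn ℂ H A0 ∧ Set.BijOn H A0 Ω0 ∧
        DifferentiableOn ℂ Hinv Ω0 ∧
        (∀ z ∈ A0, Hinv (H z) = z) ∧ (∀ w ∈ Ω0, H (Hinv w) = w)) :=
  (stmt0_general
    ⟨fun i => .of_image_eq (hfhol i) (hghol i) (hfim i) (hgf i), hAopen, hΩopen, hA0open, hΩ0open,
      hlimA, hlimΩ, (tendstoLocallyUniformlyOn_iff_forall_isCompact hA0open).2 hF,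
      (tendstoLocallyUniformlyOn_iff_forall_isCompact hΩ0open).2 hG⟩
    hA0conn.isPreconnected hΩ0conn.isPreconnected).imp_right fun h =>
      ⟨id, strictMono_id, F, G, hF, h.differentiableOn, h.bijOn, h.differentiableOn_inv,
        h.invOn.1, h.invOn.2⟩
end

section
/- Let N ≥ 1 and let Ω be a domain in ℂ^N. Let f_j : Ω → ℂ be holomorphic maps with f_j(z) ≠ 0 for every z ∈ Ω and every j, and assume f_j converges locally uniformly on Ω to a map f. Then either f is identically zero on Ω, or f(z) ≠ 0 for every z ∈ Ω. -/
open Filter Topology Set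

/-!
Hurwitz's theorem in one variable rests on the minimum modulus principle: if the limit `g` is not
identically zero but has a zero, then `‖g‖` has a positive lower bound on a small circle around this
zero, so the functions close to `g` are smaller in norm at the centre than on the circle and must
vanish inside.
In several variables, two points of a convex open set lie on a complex line meeting it in a convex
open set. Hence the one-variable theorem shows that vanishing of the limit is a locally constant
property.
-/

section MinimumModulus

variable {E : Type*} [NormedAddCommGroup E] [NormedSpace ℂ E] [Nontrivial E] {U : Set E}
  {a : E} {m : ℝ}

theorem exists_mem_eq_zero_of_norm_lt_of_forall_mem_frontier_le_norm {f : E → ℂ}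
    (hU : Bornology.IsBounded U) (hf : DiffContOnCl ℂ f U) (ha : a ∈ U) (hfa : ‖f a‖ < m)
    (hm : ∀ z ∈ frontier U, m ≤ ‖f z‖) : ∃ z ∈ U, f z = 0 := by
  by_contra! hne
  have hm_pos : 0 < m := (norm_nonneg _).trans_lt hfa
  have hne_closure : ∀ z ∈ closure U, f z ≠ 0 := by
    rw [closure_eq_self_union_frontier]
    rintro z (hz | hz)
    · exact hne z hz
    · exact norm_pos_iff.1 (hm_pos.trans_le (hm z hz))
  have hinv_frontier : ∀ z ∈ frontier U, ‖f⁻¹ z‖ ≤ m⁻¹ := fun z hz => by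
    simpa only [Pi.inv_apply, norm_inv] using inv_anti₀ hm_pos (hm z hz)
  have hinv : ‖f a‖⁻¹ ≤ m⁻¹ := by
    simpa only [Pi.inv_apply, norm_inv] using Complex.norm_le_of_forall_mem_frontier_norm_le hU
      (hf.inv hne_closure) hinv_frontier (subset_closure ha)
  exact hfa.not_ge ((inv_le_inv₀ (norm_pos_iff.2 (hne a ha)) hm_pos).1 hinv)

theorem eventually_exists_mem_eq_zero_of_tendstoUniformlyOn {ι : Type*} {p : Filter ι}
    {f : ι → E → ℂ} {g : E → ℂ} (hU : Bornology.IsBounded U)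
    (hf : ∀ᶠ n in p, DiffContOnCl ℂ (f n) U) (hfg : TendstoUniformlyOn f g p (closure U))
    (ha : a ∈ U) (hga : g a = 0) (hm_pos : 0 < m) (hm : ∀ z ∈ frontier U, m ≤ ‖g z‖) :
    ∀ᶠ n in p, ∃ z ∈ U, f n z = 0 := by
  filter_upwards [hf, Metric.tendstoUniformlyOn_iff.1 hfg (m / 2) (half_pos hm_pos)]
    with n hfn hclose
  have hfa : ‖f n a‖ < m / 2 := by
    simpa only [hga, dist_zero_left] using hclose a (subset_closure ha)
  have hfrontier : ∀ z ∈ frontier U, m / 2 ≤ ‖f n z‖ := fun z hz => by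
    have hdist : ‖g z - f n z‖ < m / 2 := by
      simpa only [dist_eq_norm] using hclose z (frontier_subset_closure hz)
    linarith [hm z hz, norm_sub_norm_le (g z) (f n z)]
  exact exists_mem_eq_zero_of_norm_lt_of_forall_mem_frontier_le_norm hU hfn ha hfa hfrontier

end MinimumModulus

theorem exists_closedBall_subset_forall_mem_sphere_le_norm {E F : Type*}
    [PseudoMetricSpace E] [ProperSpace E] [NormedAddCommGroup F] {U : Set E} {g : E → F}
    {a : E} (hU : U ∈ 𝓝 a) (hg : ContinuousOn g U) (hne : ∀ᶠ z in 𝓝[≠] a, g z ≠ 0) :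
    ∃ r > 0, Metric.closedBall a r ⊆ U ∧ ∃ m > 0, ∀ z ∈ Metric.sphere a r, m ≤ ‖g z‖ := by
  obtain ⟨r, hr, hball⟩ := Metric.nhds_basis_closedBall.eventually_iff.1
    ((eventually_nhdsWithin_iff.1 hne).and hU)
  have hsub : Metric.closedBall a r ⊆ U := fun z hz => (hball hz).2
  have hpos : ∀ z ∈ Metric.sphere a r, 0 < ‖g z‖ := fun z hz =>
    norm_pos_iff.2 ((hball (Metric.sphere_subset_closedBall hz)).1
      (Metric.ne_of_mem_sphere hz hr.ne'))
  exact ⟨r, hr, hsub, (isCompact_sphere a r).exists_forall_le'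
    (hg.mono (Metric.sphere_subset_closedBall.trans hsub)).norm hpos⟩

section Hurwitz

variable {ι : Type*} {p : Filter ι}

theorem eventually_exists_mem_eq_zero_of_tendstoLocallyUniformlyOn [p.NeBot] {U : Set ℂ}
    {f : ι → ℂ → ℂ} {g : ℂ → ℂ} {a : ℂ} (hU : IsOpen U)
    (hf : ∀ᶠ n in p, DifferentiableOn ℂ (f n) U) (hfg : TendstoLocallyUniformlyOn f g p U)
    (ha : a ∈ U) (hga : g a = 0) (hne : ∀ᶠ z in 𝓝[≠] a, g z ≠ 0) :
    ∀ᶠ n in p, ∃ z ∈ U, f n z = 0 := by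
  obtain ⟨r, hr, hsub, m, hm_pos, hm⟩ := exists_closedBall_subset_forall_mem_sphere_le_norm
    (hU.mem_nhds ha) (hfg.differentiableOn hf hU).continuousOn hne
  have hclosure : closure (Metric.ball a r) = Metric.closedBall a r := closure_ball a hr.ne'
  have hunif : TendstoUniformlyOn f g p (closure (Metric.ball a r)) := hclosure ▸
    (tendstoLocallyUniformlyOn_iff_forall_isCompact hU).1 hfg _ hsub (isCompact_closedBall a r)
  have hdiff : ∀ᶠ n in p, DiffContOnCl ℂ (f n) (Metric.ball a r) := hf.mono fun n hfn =>
    (hfn.mono (hclosure ▸ hsub)).diffContOnCl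
  filter_upwards [eventually_exists_mem_eq_zero_of_tendstoUniformlyOn Metric.isBounded_ball hdiff
    hunif (Metric.mem_ball_self hr) hga hm_pos (frontier_ball a hr.ne' ▸ hm)] with n ⟨z, hz, hfz⟩
  exact ⟨z, hsub (Metric.ball_subset_closedBall hz), hfz⟩

theorem eqOn_zero_of_tendstoLocallyUniformlyOn_of_frequently_ne_zero {U : Set ℂ}
    {f : ι → ℂ → ℂ} {g : ℂ → ℂ} {a : ℂ} (hU : IsOpen U) (hUc : IsPreconnected U)
    (hf : ∀ᶠ n in p, DifferentiableOn ℂ (f n) U) (hne : ∃ᶠ n in p, ∀ z ∈ U, f n z ≠ 0)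
    (hfg : TendstoLocallyUniformlyOn f g p U) (ha : a ∈ U) (hga : g a = 0) : EqOn g 0 U := by
  have : p.NeBot := ⟨fun hp => hne (hp ▸ eventually_bot)⟩
  have hg : AnalyticOnNhd ℂ g U := (hfg.differentiableOn hf hU).analyticOnNhd hU
  rcases (hg a ha).eventually_eq_zero_or_eventually_ne_zero with hzero | hisolated
  · exact hg.eqOn_zero_of_preconnected_of_eventuallyEq_zero hUc ha hzero
  · obtain ⟨n, hfn, z, hz, hfz⟩ := (hne.and_eventually
      (eventually_exists_mem_eq_zero_of_tendstoLocallyUniformlyOn hU hf hfg ha hga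
        hisolated)).exists
    exact absurd hfz (hfn z hz)

variable {E : Type*} [NormedAddCommGroup E] [NormedSpace ℂ E] {U : Set E} {f : ι → E → ℂ}
  {F : E → ℂ}

theorem eqOn_zero_of_convex_of_frequently_ne_zero (hU : IsOpen U) (hUc : Convex ℝ U)
    (hf : ∀ᶠ n in p, DifferentiableOn ℂ (f n) U) (hne : ∃ᶠ n in p, ∀ z ∈ U, f n z ≠ 0)
    (hF : ∀ K ⊆ U, IsCompact K → TendstoUniformlyOn f F p K) {a : E} (ha : a ∈ U)
    (hFa : F a = 0) : EqOn F 0 U := by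
  intro b hb
  let L : ℂ → E := fun t => a + t • (b - a)
  have hL : Differentiable ℂ L := by fun_prop
  have hV : IsOpen (L ⁻¹' U) := hU.preimage hL.continuous
  have hVc : IsPreconnected (L ⁻¹' U) :=
    ((hUc.translate_preimage_right a).linear_preimage
      ((LinearMap.toSpanSingleton ℂ E (b - a)).restrictScalars ℝ)).isPreconnected
  have hlim : TendstoLocallyUniformlyOn (fun n => f n ∘ L) (F ∘ L) p (L ⁻¹' U) :=
    (tendstoLocallyUniformlyOn_iff_forall_isCompact hV).2 fun K hKV hK =>
      ((hF (L '' K) (image_subset_iff.2 hKV) (hK.image hL.continuous)).comp L).mono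
        (subset_preimage_image L K)
  have hL0 : L 0 = a := by simp [L]
  have hL1 : L 1 = b := by simp [L]
  have hzero : EqOn (F ∘ L) 0 (L ⁻¹' U) :=
    eqOn_zero_of_tendstoLocallyUniformlyOn_of_frequently_ne_zero (a := 0) hV hVc
      (hf.mono fun n hfn => hfn.comp hL.differentiableOn (mapsTo_preimage L U))
      (hne.mono fun n hfn t ht => hfn (L t) ht) hlim (by rwa [mem_preimage, hL0])
      (by rwa [Function.comp_apply, hL0])
  exact hL1 ▸ hzero (show L 1 ∈ U by rwa [hL1])

theorem stmt1_general (hU : IsOpen U) (hUc : IsPreconnected U)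
    (hf : ∀ᶠ n in p, DifferentiableOn ℂ (f n) U) (hne : ∃ᶠ n in p, ∀ z ∈ U, f n z ≠ 0)
    (hF : ∀ K ⊆ U, IsCompact K → TendstoUniformlyOn f F p K) :
    (∀ z ∈ U, F z = 0) ∨ (∀ z ∈ U, F z ≠ 0) := by
  have hlocal : ∀ a ∈ U, ∀ᶠ b in 𝓝[U] a, (F a = 0 ↔ F b = 0) := fun a ha => by
    obtain ⟨r, hr, hball⟩ := Metric.isOpen_iff.1 hU a ha
    have hpropagate {x y : E} (hx : x ∈ Metric.ball a r) (hy : y ∈ Metric.ball a r)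
        (hFx : F x = 0) : F y = 0 :=
      eqOn_zero_of_convex_of_frequently_ne_zero Metric.isOpen_ball (convex_ball a r)
        (hf.mono fun n hfn => hfn.mono hball) (hne.mono fun n hfn z hz => hfn z (hball hz))
        (fun K hK => hF K (hK.trans hball)) hx hFx hy
    filter_upwards [mem_nhdsWithin_of_mem_nhds (Metric.ball_mem_nhds a hr)] with b hb
    exact ⟨hpropagate (Metric.mem_ball_self hr) hb, hpropagate hb (Metric.mem_ball_self hr)⟩
  have hglobal : ∀ a ∈ U, ∀ b ∈ U, (F a = 0 ↔ F b = 0) := fun a ha b hb =>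
    hUc.induction₂ (fun x y => F x = 0 ↔ F y = 0) hlocal (fun _ _ _ _ _ _ => Iff.trans)
      (fun _ _ _ _ => Iff.symm) ha hb
  by_contra! ⟨⟨a, ha, hFa⟩, b, hb, hFb⟩
  exact hFa ((hglobal a ha b hb).2 hFb)

end Hurwitz

theorem stmt1 (N : ℕ) (hN : 1 ≤ N)
    (Ω : Set (Fin N → ℂ)) (hΩopen : IsOpen Ω) (hΩconn : IsConnected Ω)
    (f : ℕ → (Fin N → ℂ) → ℂ)
    (hfhol : ∀ j, DifferentiableOn ℂ (f j) Ω)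
    (hfne : ∀ j, ∀ z ∈ Ω, f j z ≠ 0)
    (F : (Fin N → ℂ) → ℂ)
    (hF : ∀ K : Set (Fin N → ℂ), K ⊆ Ω → IsCompact K →
      TendstoUniformlyOn (fun j => f j) F atTop K) :
    (∀ z ∈ Ω, F z = 0) ∨ (∀ z ∈ Ω, F z ≠ 0) :=
  stmt1_general hΩopen hΩconn.isPreconnected (.of_forall hfhol) (.of_forall hfne) hF
end

section
/- Let N ≥ 1, let U be an open subset of ℂ^N, and let F : U → ℂ^N be a holomorphic map with det F'(z) = 0 for every z ∈ U. Then the image F(U) has empty interior in ℂ^N. -/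
open Filter Topology Set

/-!
The determinant of `F' z` as a real endomorphism is the field norm of its complex determinant,
here `|det F' z|² = 0`. So every point of `U` is critical for `F` as a real map, and the
equidimensional Sard theorem makes `F '' U` Lebesgue-null, hence without interior.
-/

theorem det_restrictScalars_eq_norm_det (R : Type*) {S M : Type*} [CommRing R] [CommRing S]
    [Algebra R S] [Module.Free R S] [TopologicalSpace M] [AddCommGroup M] [Module R M] [Module S M]
    [IsScalarTower R S M] [Module.Free S M] (A : M →L[S] M) :
    (A.restrictScalars R).det = Algebra.norm R A.det :=
  LinearMap.det_restrictScalars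

section Sard

variable {𝕜 E : Type*} [RCLike 𝕜] [NormedAddCommGroup E] [NormedSpace 𝕜 E]
  {s : Set E} {f : E → E} {f' : E → E →L[𝕜] E}

theorem addHaar_image_eq_zero_of_rclike_det_eq_zero [NormedSpace ℝ E] [IsScalarTower ℝ 𝕜 E]
    [FiniteDimensional ℝ E] [MeasurableSpace E] [BorelSpace E]
    (μ : MeasureTheory.Measure E) [μ.IsAddHaarMeasure]
    (hf' : ∀ x ∈ s, HasFDerivWithinAt f (f' x) s x) (hdet : ∀ x ∈ s, (f' x).det = 0) :
    μ (f '' s) = 0 := by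
  have hdet_real : ∀ x ∈ s, ((f' x).restrictScalars ℝ).det = 0 := fun x hx ↦ by
    rw [det_restrictScalars_eq_norm_det, hdet x hx, Algebra.norm_zero]
  exact MeasureTheory.addHaar_image_eq_zero_of_det_fderivWithin_eq_zero μ
    (fun x hx ↦ (hf' x hx).restrictScalars ℝ) hdet_real

theorem stmt3_general [FiniteDimensional 𝕜 E]
    (hf' : ∀ x ∈ s, HasFDerivWithinAt f (f' x) s x) (hdet : ∀ x ∈ s, (f' x).det = 0) :
    interior (f '' s) = ∅ := by
  let : NormedSpace ℝ E := .restrictScalars ℝ 𝕜 E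
  have : IsScalarTower ℝ 𝕜 E := .restrictScalars ℝ 𝕜 E
  have : FiniteDimensional ℝ E := .trans ℝ 𝕜 E
  borelize E
  exact MeasureTheory.Measure.interior_eq_empty_of_null
    (addHaar_image_eq_zero_of_rclike_det_eq_zero MeasureTheory.Measure.addHaar hf' hdet)

end Sard

theorem stmt3 (N : ℕ) (hN : 1 ≤ N)
    (U : Set (Fin N → ℂ)) (hU : IsOpen U)
    (F : (Fin N → ℂ) → (Fin N → ℂ))
    (hFhol : DifferentiableOn ℂ F U)
    (hdet : ∀ z ∈ U, (fderiv ℂ F z).det = 0) :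
    interior (F '' U) = ∅ :=
  stmt3_general
    (fun _ hz ↦ (hFhol.differentiableAt (hU.mem_nhds hz)).hasFDerivAt.hasFDerivWithinAt) hdet
end
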